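/- In the group G = ⟨x, y | x y² x⁻¹ = y³⟩, the subgroup generated by the two elements y⁴ and x y⁴ x⁻¹ equals the subgroup generated by y², and this subgroup is infinite cyclic. -/

import Mathlib

/-- The single relator `x y² x⁻¹ y⁻³` in the free group on two generators. -/
def bsRels : Set (FreeGroup (Fin 2)) :=
  {FreeGroup.of 0 * FreeGroup.of 1 ^ 2 * (FreeGroup.of 0)⁻¹ * (FreeGroup.of 1 ^ 3)⁻¹}

/-- The Baumslag–Solitar group `G = ⟨x, y | x y² x⁻¹ = y³⟩`. -/
abbrev BSGroup := PresentedGroup bsRels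

/-- `x ∈ G`. -/
def bsX : BSGroup := PresentedGroup.of 0

/-- `y ∈ G`. -/
def bsY : BSGroup := PresentedGroup.of 1

theorem bs_rel : bsX * bsY ^ 2 * bsX⁻¹ = bsY ^ 3 := by
  have h : PresentedGroup.mk bsRels (FreeGroup.of 0 * FreeGroup.of 1 ^ 2 *
      (FreeGroup.of 0)⁻¹ * (FreeGroup.of 1 ^ 3)⁻¹) = 1 :=
    PresentedGroup.one_of_mem (by simp [bsRels])
  simp only [map_mul, map_pow, map_inv] at h
  exact mul_inv_eq_one.mp h

theorem bs_rel4 : bsX * bsY ^ 4 * bsX⁻¹ = bsY ^ 6 := by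
  have h : bsX * bsY ^ 4 * bsX⁻¹ = (bsX * bsY ^ 2 * bsX⁻¹) ^ 2 := by
    rw [conj_pow, ← pow_mul]
  rw [h, bs_rel, ← pow_mul]

/-- Images of the generators as affine permutations of the rationals. -/
def bsGen : Fin 2 → Equiv.Perm ℚ :=
  ![Equiv.mulLeft₀ (3 / 2 : ℚ) (by norm_num), Equiv.addRight 1]

theorem bsGen_rel : ∀ r ∈ bsRels, FreeGroup.lift bsGen r = 1 := by
  intro r hr
  rw [bsRels, Set.mem_singleton_iff] at hr
  subst hr
  rw [map_mul, map_inv, mul_inv_eq_one]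
  simp only [map_mul, map_pow, map_inv, FreeGroup.lift_apply_of]
  rw [mul_inv_eq_iff_eq_mul]
  ext q
  simp [bsGen, pow_succ]
  ring

theorem bsY_zpow_injective (n : ℤ) (h : bsY ^ n = 1) : n = 0 := by
  have h2 := congrArg (PresentedGroup.toGroup bsGen_rel) h
  rw [map_zpow, map_one] at h2
  have h3 : PresentedGroup.toGroup bsGen_rel bsY = Equiv.addRight (1 : ℚ) := by
    rw [bsY, PresentedGroup.toGroup.of]; rfl
  rw [h3] at h2
  have h4 := congrArg (fun e : Equiv.Perm ℚ => e 0) h2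
  simpa using h4

/-- In `G = ⟨x, y | x y² x⁻¹ = y³⟩`, the subgroup generated by `y⁴` and
`x y⁴ x⁻¹` equals the subgroup generated by `y²`, and this subgroup is
infinite cyclic. -/
theorem closure_y4_xy4xinv_eq_closure_y2_and_infinite_cyclic :
    Subgroup.closure ({bsY ^ 4, bsX * bsY ^ 4 * bsX⁻¹} : Set BSGroup) =
      Subgroup.closure {bsY ^ 2} ∧
    Nonempty (↥(Subgroup.closure ({bsY ^ 2} : Set BSGroup)) ≃* Multiplicative ℤ) := by
  constructor
  · rw [bs_rel4]
    apply le_antisymm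
    · rw [Subgroup.closure_le]
      rintro z (rfl | rfl)
      · exact Subgroup.mem_closure_singleton.mpr ⟨2, by group⟩
      · exact Subgroup.mem_closure_singleton.mpr ⟨3, by group⟩
    · rw [Subgroup.closure_le, Set.singleton_subset_iff]
      have h4 : bsY ^ 4 ∈ Subgroup.closure ({bsY ^ 4, bsY ^ 6} : Set BSGroup) :=
        Subgroup.subset_closure (by simp)
      have h6 : bsY ^ 6 ∈ Subgroup.closure ({bsY ^ 4, bsY ^ 6} : Set BSGroup) :=
        Subgroup.subset_closure (by simp)
      have h : bsY ^ 2 = bsY ^ 6 * (bsY ^ 4)⁻¹ := by group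
      rw [h]
      exact Subgroup.mul_mem _ h6 (Subgroup.inv_mem _ h4)
  · rw [← Subgroup.zpowers_eq_closure]
    have hinj : Function.Injective (zpowersHom BSGroup (bsY ^ 2)) := by
      rw [injective_iff_map_eq_one]
      intro a ha
      rw [zpowersHom_apply, ← zpow_natCast, ← zpow_mul] at ha
      have := bsY_zpow_injective _ ha
      apply Multiplicative.toAdd.injective
      rw [toAdd_one]
      push_cast at this
      omega
    exact ⟨(MonoidHom.ofInjective hinj).symm⟩
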